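/- arXiv:1807.01186 — 3 statements merged into one kernel-verified Lean document; each statement's English description precedes it below -/
import Mathlib

section
/- Suppose Π ⊆ ℝ^d is a closed convex set with 0 ∈ Π, 𝔹 ⊆ ℝ^d is convex and compact, and Σ is a convex compact set of d×d real symmetric positive definite matrices. Then G admits a saddle point on Π × (𝔹 × Σ): there exist p* ∈ Π and (b*, S*) ∈ 𝔹 × Σ such that for every p ∈ Π and every (b, S) ∈ 𝔹 × Σ one has G(p; b*, S*) ≤ G(p*; b*, S*) ≤ G(p*; b, S). Moreover the saddle value satisfies G(p*; b*, S*) ≥ δr ≥ 0. -/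
open Matrix

/-!
`G` is concave and continuous in `p`, affine and continuous in `(b, S)`, and Sion's minimax equality
needs compactness only of the set of `(b, S)`. Both extrema in that equality are attained:
minimizing over `(b, S)` is a problem on a compact set, and maximizing over `p` may be restricted to
a superlevel set of `G(·; b₀, S₀)` for a single positive definite `S₀`, which is compact because a
positive definite form outgrows any linear one. The level `δ r = G(0; b, S)` serves here because it
does not depend on `(b, S)`; for the same reason it bounds the saddle value from below.
-/

section Sion

variable {E F : Type*} [TopologicalSpace E] [AddCommGroup E] [Module ℝ E]
  [IsTopologicalAddGroup E] [ContinuousSMul ℝ E] [TopologicalSpace F] [AddCommGroup F]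
  [Module ℝ F] [IsTopologicalAddGroup F] [ContinuousSMul ℝ F]

theorem exists_isSaddlePointOn_of_isCompact_superlevel {β : Type*} [CompleteLinearOrder β]
    [DenselyOrdered β] {X : Set E} {Y : Set F} {f : E → F → β}
    (hX : Convex ℝ X) (hXc : IsCompact X) (hY : Convex ℝ Y)
    (hlsc : ∀ y ∈ Y, LowerSemicontinuousOn (f · y) X)
    (hconvex : ∀ y ∈ Y, QuasiconvexOn ℝ X (f · y))
    (husc : ∀ x ∈ X, UpperSemicontinuousOn (f x) Y)
    (hconcave : ∀ x ∈ X, QuasiconcaveOn ℝ Y (f x))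
    {c : β} {x₀ : E} (hx₀ : x₀ ∈ X) (hsuper : IsCompact {y ∈ Y | c ≤ f x₀ y})
    {y₁ : F} (hy₁ : y₁ ∈ Y) (hc : ∀ x ∈ X, c ≤ f x y₁) :
    ∃ a ∈ X, ∃ b ∈ Y, IsSaddlePointOn X Y f a b := by
  obtain ⟨a, ha, ha_min⟩ : ∃ a ∈ X, IsMinOn (fun x ↦ ⨆ y ∈ Y, f x y) X a :=
    (lowerSemicontinuousOn_biSup hlsc).exists_isMinOn ⟨x₀, hx₀⟩ hXc
  obtain ⟨b, ⟨hb, -⟩, hb_max⟩ :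
      ∃ b ∈ {y ∈ Y | c ≤ f x₀ y}, IsMaxOn (fun y ↦ ⨅ x ∈ X, f x y) {y ∈ Y | c ≤ f x₀ y} b :=
    ((upperSemicontinuousOn_biInf husc).mono (Set.sep_subset _ _)).exists_isMaxOn
      ⟨y₁, hy₁, hc x₀ hx₀⟩ hsuper
  have hb_max' : ∀ y ∈ Y, ⨅ x ∈ X, f x y ≤ ⨅ x ∈ X, f x b := by
    intro y hy
    rcases le_or_gt c (f x₀ y) with h | h
    · exact hb_max ⟨hy, h⟩
    · calc ⨅ x ∈ X, f x y ≤ f x₀ y := iInf₂_le x₀ hx₀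
        _ ≤ c := h.le
        _ ≤ ⨅ x ∈ X, f x y₁ := le_iInf₂ hc
        _ ≤ ⨅ x ∈ X, f x b := hb_max ⟨hy₁, hc x₀ hx₀⟩
  refine ⟨a, ha, b, hb, (isSaddlePointOn_iff' ha hb).mpr ?_⟩
  calc ⨆ y ∈ Y, f a y ≤ ⨅ x ∈ X, ⨆ y ∈ Y, f x y := le_iInf₂ ha_min
    _ = ⨆ y ∈ Y, ⨅ x ∈ X, f x y :=
      Sion.minimax' ⟨x₀, hx₀⟩ hX hXc hlsc hconvex hY husc hconcave
    _ ≤ ⨅ x ∈ X, f x b := iSup₂_le hb_max'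

theorem exists_isSaddlePointOn_real_of_isCompact_superlevel {X : Set E} {Y : Set F}
    {f : E → F → ℝ} (hX : Convex ℝ X) (hXc : IsCompact X) (hY : Convex ℝ Y)
    (hlsc : ∀ y ∈ Y, LowerSemicontinuousOn (f · y) X)
    (hconvex : ∀ y ∈ Y, QuasiconvexOn ℝ X (f · y))
    (husc : ∀ x ∈ X, UpperSemicontinuousOn (f x) Y)
    (hconcave : ∀ x ∈ X, QuasiconcaveOn ℝ Y (f x))
    {c : ℝ} {x₀ : E} (hx₀ : x₀ ∈ X) (hsuper : IsCompact {y ∈ Y | c ≤ f x₀ y})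
    {y₁ : F} (hy₁ : y₁ ∈ Y) (hc : ∀ x ∈ X, c ≤ f x y₁) :
    ∃ a ∈ X, ∃ b ∈ Y, IsSaddlePointOn X Y f a b := by
  have hmono : Monotone Real.toEReal := EReal.coe_strictMono.monotone
  have hcont : Continuous Real.toEReal := continuous_coe_real_ereal
  obtain ⟨a, ha, b, hb, hab⟩ : ∃ a ∈ X, ∃ b ∈ Y,
      IsSaddlePointOn X Y (fun x y ↦ (f x y : EReal)) a b :=
    exists_isSaddlePointOn_of_isCompact_superlevel hX hXc hY
      (fun y hy ↦ hcont.comp_lowerSemicontinuousOn (hlsc y hy) hmono)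
      (fun y hy ↦ (hconvex y hy).monotone_comp (g := Real.toEReal) hmono)
      (fun x hx ↦ hcont.comp_upperSemicontinuousOn (husc x hx) hmono)
      (fun x hx ↦ (hconcave x hx).monotone_comp (g := Real.toEReal) hmono)
      (c := (c : EReal)) hx₀ (by simpa only [EReal.coe_le_coe_iff] using hsuper) hy₁
      (fun x hx ↦ EReal.coe_le_coe (hc x hx))
  exact ⟨a, ha, b, hb, fun x hx y hy ↦ EReal.coe_le_coe_iff.mp (hab x hx y hy)⟩

end Sion

section Homogeneous

variable {E : Type*} [NormedAddCommGroup E] [NormedSpace ℝ E] [ProperSpace E]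

theorem exists_pos_mul_norm_pow_le_of_homogeneous {n : ℕ} (hn : n ≠ 0) {q : E → ℝ}
    (hq : Continuous q) (hhom : ∀ (t : ℝ) (x : E), q (t • x) = t ^ n * q x)
    (hpos : ∀ x ≠ 0, 0 < q x) :
    ∃ m > 0, ∀ x, m * ‖x‖ ^ n ≤ q x := by
  obtain ⟨m, hm, hsphere⟩ : ∃ m > 0, ∀ x ∈ Metric.sphere (0 : E) 1, m ≤ q x :=
    (isCompact_sphere 0 1).exists_forall_le' hq.continuousOn
      fun x hx ↦ hpos x (ne_zero_of_mem_unit_sphere ⟨x, hx⟩)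
  refine ⟨m, hm, fun x ↦ ?_⟩
  rcases eq_or_ne x 0 with rfl | hx
  · have : q 0 = 0 := by simpa [hn] using hhom 0 0
    simp [this, hn]
  · have hx' : ‖x‖ ≠ 0 := norm_ne_zero_iff.mpr hx
    have hunit : ‖x‖⁻¹ • x ∈ Metric.sphere (0 : E) 1 := by simp [norm_smul, hx']
    calc m * ‖x‖ ^ n ≤ q (‖x‖⁻¹ • x) * ‖x‖ ^ n := by gcongr; exact hsphere _ hunit
      _ = q (‖x‖ • ‖x‖⁻¹ • x) := by rw [hhom ‖x‖, mul_comm]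
      _ = q x := by rw [smul_inv_smul₀ hx']

theorem isCompact_setOf_le_of_homogeneous_two {q : E → ℝ}
    (hq : Continuous q) (hhom : ∀ (t : ℝ) (x : E), q (t • x) = t ^ 2 * q x)
    (hpos : ∀ x ≠ 0, 0 < q x) (φ : E →L[ℝ] ℝ) :
    IsCompact {x | q x ≤ φ x} := by
  obtain ⟨m, hm, hlower⟩ := exists_pos_mul_norm_pow_le_of_homogeneous two_ne_zero hq hhom hpos
  refine (isCompact_closedBall (0 : E) (‖φ‖ / m)).of_isClosed_subset
    (isClosed_le hq φ.continuous) fun x hx ↦ ?_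
  have hle : ‖x‖ * (m * ‖x‖) ≤ ‖x‖ * ‖φ‖ :=
    calc ‖x‖ * (m * ‖x‖) = m * ‖x‖ ^ 2 := by ring
      _ ≤ q x := hlower x
      _ ≤ φ x := hx
      _ ≤ ‖x‖ * ‖φ‖ := by simpa only [mul_comm] using (le_abs_self _).trans (φ.le_opNorm x)
  rw [mem_closedBall_zero_iff, le_div_iff₀' hm]
  rcases (norm_nonneg x).eq_or_lt with h | h
  · simp [← h]
  · exact le_of_mul_le_mul_left hle h

end Homogeneous

section QuadraticForm

variable {ι : Type*} [Fintype ι] {S : Matrix ι ι ℝ}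

theorem convexOn_dotProduct_mulVec_self (hS : S.PosSemidef) :
    ConvexOn ℝ Set.univ fun p : ι → ℝ ↦ p ⬝ᵥ S *ᵥ p := by
  refine ⟨convex_univ, fun p _ q _ s t hs ht hst ↦ sub_nonneg.mp ?_⟩
  obtain rfl : t = 1 - s := by linarith
  have hpq : 0 ≤ (p - q) ⬝ᵥ S *ᵥ (p - q) := by simpa using hS.dotProduct_mulVec_nonneg (p - q)
  calc 0 ≤ s * (1 - s) * ((p - q) ⬝ᵥ S *ᵥ (p - q)) := by positivity
    _ = _ := by
      simp only [mulVec_add, mulVec_sub, mulVec_smul, add_dotProduct, sub_dotProduct,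
        smul_dotProduct, dotProduct_add, dotProduct_sub, dotProduct_smul, smul_eq_mul]
      ring

theorem isCompact_setOf_dotProduct_mulVec_self_le (hS : S.PosDef) (v : ι → ℝ) :
    IsCompact {p : ι → ℝ | p ⬝ᵥ S *ᵥ p ≤ p ⬝ᵥ v} := by
  have h := isCompact_setOf_le_of_homogeneous_two (q := fun p : ι → ℝ ↦ p ⬝ᵥ S *ᵥ p)
    (by fun_prop)
    (fun t p ↦ by simp only [mulVec_smul, smul_dotProduct, dotProduct_smul, smul_eq_mul]; ring)
    (fun p hp ↦ by simpa using hS.dotProduct_mulVec_pos hp)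
    (dotProductBilin ℝ ℝ v).toContinuousLinearMap
  simpa [dotProduct_comm] using h

end QuadraticForm

section PowerUtility

variable {ι : Type*} [Fintype ι] {δ r : ℝ}

/-- The function `G(p; b, S)`: by Itô's formula, `V ^ δ` has relative drift `G(p; b, S)` if the
wealth `V` is invested in proportions `p` in assets with drift `b` and covariance `S`, and the rest
at the interest rate `r`. -/
noncomputable def powerUtilityDrift (δ r : ℝ) (p b : ι → ℝ) (S : Matrix ι ι ℝ) : ℝ :=
  (1 / 2) * δ * (δ - 1) * (p ⬝ᵥ S *ᵥ p) + δ * (p ⬝ᵥ (b - r • fun _ ↦ (1 : ℝ))) + δ * r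

theorem powerUtilityDrift_zero (δ r : ℝ) (b : ι → ℝ) (S : Matrix ι ι ℝ) :
    powerUtilityDrift δ r 0 b S = δ * r := by
  simp [powerUtilityDrift]

theorem continuous_powerUtilityDrift (δ r : ℝ) :
    Continuous fun x : (ι → ℝ) × (ι → ℝ) × Matrix ι ι ℝ ↦
      powerUtilityDrift δ r x.1 x.2.1 x.2.2 := by
  unfold powerUtilityDrift
  fun_prop

theorem convexOn_powerUtilityDrift_drift_covariance (δ r : ℝ) (p : ι → ℝ) :
    ConvexOn ℝ Set.univ fun x : (ι → ℝ) × Matrix ι ι ℝ ↦ powerUtilityDrift δ r p x.1 x.2 := by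
  refine ⟨convex_univ, fun x _ y _ s t _ _ hst ↦ le_of_eq ?_⟩
  obtain rfl : t = 1 - s := by linarith
  simp only [powerUtilityDrift, Prod.fst_add, Prod.snd_add, Prod.smul_fst, Prod.smul_snd,
    add_mulVec, smul_mulVec, dotProduct_add, dotProduct_sub, dotProduct_smul, smul_eq_mul]
  ring

theorem concaveOn_powerUtilityDrift (hδ : δ ∈ Set.Icc (0 : ℝ) 1) (b : ι → ℝ)
    {S : Matrix ι ι ℝ} (hS : S.PosSemidef) :
    ConcaveOn ℝ Set.univ fun p ↦ powerUtilityDrift δ r p b S := by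
  have hcoeff : 0 ≤ (1 / 2) * δ * (1 - δ) :=
    mul_nonneg (mul_nonneg one_half_pos.le hδ.1) (sub_nonneg.mpr hδ.2)
  have hquadratic : ConcaveOn ℝ Set.univ
      fun p : ι → ℝ ↦ -((1 / 2) * δ * (1 - δ) * (p ⬝ᵥ S *ᵥ p)) :=
    ((convexOn_dotProduct_mulVec_self hS).smul hcoeff).neg
  have hlinear : ConcaveOn ℝ Set.univ fun p : ι → ℝ ↦ δ * (p ⬝ᵥ (b - r • fun _ ↦ (1 : ℝ))) :=
    (δ • (dotProductBilin ℝ ℝ).flip (b - r • fun _ ↦ (1 : ℝ))).concaveOn convex_univ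
  refine ((hquadratic.add hlinear).add_const (δ * r)).congr fun p _ ↦ ?_
  simp only [powerUtilityDrift, Pi.add_apply]
  ring

theorem isCompact_superlevel_powerUtilityDrift (hδ : δ ∈ Set.Ioo (0 : ℝ) 1) (b : ι → ℝ)
    {S : Matrix ι ι ℝ} (hS : S.PosDef) :
    IsCompact {p | δ * r ≤ powerUtilityDrift δ r p b S} := by
  have hcoeff : 0 < (1 / 2) * (1 - δ) := by linarith [hδ.2]
  convert isCompact_setOf_dotProduct_mulVec_self_le (hS.smul hcoeff) (b - r • fun _ ↦ (1 : ℝ))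
    using 3 with p
  have hfactor : powerUtilityDrift δ r p b S - δ * r =
      δ * (p ⬝ᵥ (b - r • fun _ ↦ (1 : ℝ)) - p ⬝ᵥ ((1 / 2) * (1 - δ)) • S *ᵥ p) := by
    simp only [powerUtilityDrift, dotProduct_smul, smul_eq_mul]
    ring
  rw [← sub_nonneg, hfactor, mul_nonneg_iff_of_pos_left hδ.1, sub_nonneg, smul_mulVec]

end PowerUtility

theorem stmt_0_general {ι : Type*} [Fintype ι] {δ r : ℝ} (hδ : δ ∈ Set.Ioo (0 : ℝ) 1)
    {Pset : Set (ι → ℝ)} (hPclosed : IsClosed Pset) (hPconv : Convex ℝ Pset)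
    (hP0 : (0 : ι → ℝ) ∈ Pset)
    {Bset : Set (ι → ℝ)} (hBconv : Convex ℝ Bset) (hBcomp : IsCompact Bset)
    (hBne : Bset.Nonempty)
    {Sset : Set (Matrix ι ι ℝ)} (hSconv : Convex ℝ Sset) (hScomp : IsCompact Sset)
    (hSpsd : ∀ S ∈ Sset, S.PosSemidef) (hSpd : ∃ S ∈ Sset, S.PosDef) :
    ∃ pstar ∈ Pset, ∃ bstar ∈ Bset, ∃ Sstar ∈ Sset,
      (∀ p ∈ Pset, ∀ b ∈ Bset, ∀ S ∈ Sset,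
        powerUtilityDrift δ r p bstar Sstar ≤ powerUtilityDrift δ r pstar bstar Sstar ∧
        powerUtilityDrift δ r pstar bstar Sstar ≤ powerUtilityDrift δ r pstar b S) ∧
      δ * r ≤ powerUtilityDrift δ r pstar bstar Sstar := by
  obtain ⟨b₀, hb₀⟩ := hBne
  obtain ⟨S₀, hS₀, hS₀_pd⟩ := hSpd
  have hK : Convex ℝ (Bset ×ˢ Sset) := hBconv.prod hSconv
  have hδ' : δ ∈ Set.Icc (0 : ℝ) 1 := Set.Ioo_subset_Icc_self hδ
  have hcont := continuous_powerUtilityDrift (ι := ι) δ r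
  obtain ⟨⟨b, S⟩, ⟨hb, hS⟩, p, hp, hsaddle⟩ := exists_isSaddlePointOn_real_of_isCompact_superlevel
    (f := fun (x : (ι → ℝ) × Matrix ι ι ℝ) p ↦ powerUtilityDrift δ r p x.1 x.2)
    hK (hBcomp.prod hScomp) hPconv
    (fun p _ ↦ (hcont.comp (.prodMk_right p)).lowerSemicontinuous.lowerSemicontinuousOn _)
    (fun p _ ↦ ((convexOn_powerUtilityDrift_drift_covariance δ r p).subset (Set.subset_univ _)
      hK).quasiconvexOn)
    (fun x _ ↦ (hcont.comp (.prodMk_left x)).upperSemicontinuous.upperSemicontinuousOn _)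
    (fun x hx ↦ ((concaveOn_powerUtilityDrift hδ' x.1 (hSpsd x.2 hx.2)).subset (Set.subset_univ _)
      hPconv).quasiconcaveOn)
    (Set.mk_mem_prod hb₀ hS₀)
    ((isCompact_superlevel_powerUtilityDrift (r := r) hδ b₀ hS₀_pd).inter_left hPclosed)
    hP0 (fun x _ ↦ (powerUtilityDrift_zero δ r x.1 x.2).ge)
  exact ⟨p, hp, b, hb, S, hS,
    fun p' hp' b' hb' S' hS' ↦ ⟨hsaddle (b, S) ⟨hb, hS⟩ p' hp', hsaddle (b', S') ⟨hb', hS'⟩ p hp⟩,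
    (powerUtilityDrift_zero δ r b S).ge.trans (hsaddle (b, S) ⟨hb, hS⟩ 0 hP0)⟩

/-- existence of a saddle point for
`G(p; b, S) = (1/2)δ(δ−1) pᵀ S p + δ pᵀ(b − r𝟙) + δ r` on `Π × (𝔹 × Σ)`,
with saddle value `≥ δr ≥ 0`. -/
theorem stmt_0 (d : ℕ) (δ r : ℝ) (hδ : δ ∈ Set.Ioo (0 : ℝ) 1) (hr : 0 ≤ r)
    (Pset : Set (Fin d → ℝ)) (hPclosed : IsClosed Pset) (hPconv : Convex ℝ Pset)
    (hP0 : (0 : Fin d → ℝ) ∈ Pset)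
    (Bset : Set (Fin d → ℝ)) (hBconv : Convex ℝ Bset) (hBcomp : IsCompact Bset)
    (hBne : Bset.Nonempty)
    (Sset : Set (Matrix (Fin d) (Fin d) ℝ)) (hSconv : Convex ℝ Sset)
    (hScomp : IsCompact Sset) (hSne : Sset.Nonempty)
    (hSpd : ∀ S ∈ Sset, S.IsSymm ∧ S.PosDef)
    (G : (Fin d → ℝ) → (Fin d → ℝ) → Matrix (Fin d) (Fin d) ℝ → ℝ)
    (hG : ∀ p b S, G p b S =
      (1 / 2) * δ * (δ - 1) * (p ⬝ᵥ S.mulVec p)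
        + δ * (p ⬝ᵥ (b - r • ((fun _ => (1 : ℝ)) : Fin d → ℝ))) + δ * r) :
    ∃ pstar ∈ Pset, ∃ bstar ∈ Bset, ∃ Sstar ∈ Sset,
      (∀ p ∈ Pset, ∀ b ∈ Bset, ∀ S ∈ Sset,
        G p bstar Sstar ≤ G pstar bstar Sstar ∧ G pstar bstar Sstar ≤ G pstar b S) ∧
      δ * r ≤ G pstar bstar Sstar ∧ 0 ≤ δ * r := by
  obtain rfl : G = powerUtilityDrift δ r := funext fun p ↦ funext₂ (hG p)
  obtain ⟨p, hp, b, hb, S, hS, hsaddle, hvalue⟩ := stmt_0_general hδ hPclosed hPconv hP0 hBconv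
    hBcomp hBne hSconv hScomp (fun S hS ↦ (hSpd S hS).2.posSemidef)
    (hSne.imp fun S hS ↦ ⟨hS, (hSpd S hS).2⟩)
  exact ⟨p, hp, b, hb, S, hS, hsaddle, hvalue, mul_nonneg hδ.1.le hr⟩
end

section
/- Let d = 1, δ ∈ (0,1), r ≥ 0, and let real numbers p̲ ≤ 0 ≤ p̄, b̲ ≤ b̄, and 0 ≤ Σ̲ ≤ Σ̄ with Σ̄ > 0 be given. Define p* = min{p̄, (b̲ − r)/((1−δ)Σ̄)} if r ≤ b̲, p* = max{p̲, (b̄ − r)/((1−δ)Σ̄)} if r ≥ b̄, and p* = 0 if b̲ < r < b̄; and define b* = b̲ if r ≤ b̲, b* = r if b̲ < r < b̄, and b* = b̄ if r ≥ b̄. Then (p*, (b*, Σ̄)) is a saddle point of G on [p̲, p̄] × ([b̲, b̄] × [Σ̲, Σ̄]): for every p ∈ [p̲, p̄], b ∈ [b̲, b̄] and S ∈ [Σ̲, Σ̄], G(p; b*, Σ̄) ≤ G(p*; b*, Σ̄) ≤ G(p*; b, S). -/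
/-!
The worst drift `b*` is the projection of `r` onto `[bl, bu]`, and the optimal `p*` is the
projection onto `[pl, pu]` of the unconstrained maximizer `(b* - r) / ((1 - δ) Su)` of
`G(·; b*, Su)`. A concave quadratic on an interval is maximized at the projection of its vertex:
this is the left inequality. Since `0 ∈ [pl, pu]`, projecting does not reverse the sign of the
vertex, so `p*` and `b* - r` do not have opposite signs, and the variational inequality
`(r - b*) (b - b*) ≤ 0` gives `0 ≤ p* (b - b*)`. As `G(p; b, S)` grows with `p b` and decreases
in `S`, the right inequality follows.
-/

section Projection

open Set

theorem coe_projIcc_eq_ite {α : Type*} [LinearOrder α] {a b : α} (h : a ≤ b) (x : α) :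
    (projIcc a b h x : α) = if x ≤ a then a else if b ≤ x then b else x := by
  split_ifs with hxa hbx
  · rw [projIcc_of_le_left h hxa]
  · rw [projIcc_of_right_le h hbx]
  · rw [projIcc_of_mem h ⟨(not_le.1 hxa).le, (not_le.1 hbx).le⟩]

theorem sub_projIcc_mul_sub_projIcc_nonpos {R : Type*} [Ring R] [LinearOrder R] [IsOrderedRing R]
    {a b y : R} (h : a ≤ b) (x : R) (hy : y ∈ Icc a b) :
    (x - projIcc a b h x) * (y - projIcc a b h x) ≤ 0 := by
  rw [coe_projIcc_eq_ite]
  split_ifs with hxa hbx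
  · exact mul_nonpos_of_nonpos_of_nonneg (sub_nonpos.2 hxa) (sub_nonneg.2 hy.1)
  · exact mul_nonpos_of_nonneg_of_nonpos (sub_nonneg.2 hbx) (sub_nonpos.2 hy.2)
  · rw [sub_self, zero_mul]

theorem projIcc_mul_nonneg {R : Type*} [Ring R] [LinearOrder R] [IsStrictOrderedRing R]
    {a b x y : R} (ha : a ≤ 0) (hb : 0 ≤ b) (hxy : 0 ≤ x * y) :
    0 ≤ (projIcc a b (ha.trans hb) x : R) * y := by
  rw [coe_projIcc]
  rcases lt_trichotomy x 0 with hx | rfl | hx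
  · exact mul_nonneg_of_nonpos_of_nonpos (max_le ha (min_le_of_right_le hx.le))
      (nonpos_of_mul_nonneg_right hxy hx)
  · rw [min_eq_right hb, max_eq_right ha, zero_mul]
  · exact mul_nonneg (le_max_of_le_right (le_min hb hx.le)) (nonneg_of_mul_nonneg_right hxy hx)

end Projection

section PowerUtility

open Set

variable {K : Type*} [Field K] [LinearOrder K] [IsStrictOrderedRing K]
variable {δ r p b b' S S' pl pu bl bu Su : K}

/-- The function `G(p; b, S)` of the saddle-point problem, for a single risky asset: `p` is the
fraction of wealth held in it, `b` its drift, `S` its squared volatility (not the volatility),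
`r` the interest rate and `δ` the exponent of the power utility. -/
def powerUtilityGenerator (δ r p b S : K) : K :=
  1 / 2 * δ * (δ - 1) * S * p ^ 2 + δ * p * (b - r) + δ * r

theorem powerUtilityGenerator_le_projIcc (h : pl ≤ pu) (hδ₀ : 0 ≤ δ) (hδ₁ : δ < 1) (hS : 0 < S)
    (hp : p ∈ Icc pl pu) :
    powerUtilityGenerator δ r p b S ≤
      powerUtilityGenerator δ r (projIcc pl pu h ((b - r) / ((1 - δ) * S))) b S := by
  have hk : 0 < (1 - δ) * S := mul_pos (sub_pos.2 hδ₁) hS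
  set vertex := (b - r) / ((1 - δ) * S)
  have vertex_mul : (1 - δ) * S * vertex = b - r := mul_div_cancel₀ _ hk.ne'
  have variational := sub_projIcc_mul_sub_projIcc_nonpos h vertex hp
  generalize (projIcc pl pu h vertex : K) = q at variational ⊢
  have gap : powerUtilityGenerator δ r q b S - powerUtilityGenerator δ r p b S =
      δ * ((1 - δ) * S) * ((p - q) ^ 2 / 2 - (vertex - q) * (p - q)) := by
    unfold powerUtilityGenerator
    linear_combination δ * (p - q) * vertex_mul
  refine sub_nonneg.1 (gap ▸ mul_nonneg (mul_nonneg hδ₀ hk.le) ?_)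
  linarith [sq_nonneg (p - q)]

theorem powerUtilityGenerator_le_of_mul_sub_nonneg (hδ₀ : 0 ≤ δ) (hδ₁ : δ ≤ 1) (hS : S' ≤ S)
    (hb : 0 ≤ p * (b' - b)) :
    powerUtilityGenerator δ r p b S ≤ powerUtilityGenerator δ r p b' S' := by
  have gap : powerUtilityGenerator δ r p b' S' - powerUtilityGenerator δ r p b S =
      δ * (p * (b' - b) + (1 - δ) * (S - S') * p ^ 2 / 2) := by
    unfold powerUtilityGenerator
    ring
  have variance_term : 0 ≤ (1 - δ) * (S - S') * p ^ 2 :=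
    mul_nonneg (mul_nonneg (sub_nonneg.2 hδ₁) (sub_nonneg.2 hS)) (sq_nonneg p)
  refine sub_nonneg.1 (gap ▸ mul_nonneg hδ₀ ?_)
  linarith

theorem projIcc_projIcc_sub_div_eq_ite {k : K} (hpl : pl ≤ 0) (hpu : 0 ≤ pu) (hb : bl ≤ bu)
    (hk : 0 ≤ k) :
    (projIcc pl pu (hpl.trans hpu) ((projIcc bl bu hb r - r) / k) : K) =
      if r ≤ bl then min pu ((bl - r) / k)
      else if bu ≤ r then max pl ((bu - r) / k) else 0 := by
  rw [coe_projIcc, coe_projIcc_eq_ite]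
  split_ifs with hl hu
  · exact max_eq_right (hpl.trans (le_min hpu (div_nonneg (sub_nonneg.2 hl) hk)))
  · rw [min_eq_right ((div_nonpos_of_nonpos_of_nonneg (sub_nonpos.2 hu) hk).trans hpu)]
  · rw [sub_self, zero_div, min_eq_right hpu, max_eq_right hpl]

theorem projIcc_sub_div_mul_sub_nonneg {k : K} (hpl : pl ≤ 0) (hpu : 0 ≤ pu) (h : bl ≤ bu)
    (hk : 0 ≤ k) (hb : b ∈ Icc bl bu) :
    0 ≤ (projIcc pl pu (hpl.trans hpu) ((projIcc bl bu h r - r) / k) : K) *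
      (b - projIcc bl bu h r) := by
  refine projIcc_mul_nonneg hpl hpu ?_
  rw [div_mul_eq_mul_div, ← neg_sub, neg_mul]
  exact div_nonneg (neg_nonneg.2 (sub_projIcc_mul_sub_projIcc_nonpos h r hb)) hk

theorem stmt_7_general (hδ : δ ∈ Ico 0 1) (hpl : pl ≤ 0) (hpu : 0 ≤ pu) (hSu : 0 < Su)
    {pstar bstar : K}
    (hpstar : pstar = if r ≤ bl then min pu ((bl - r) / ((1 - δ) * Su))
      else if bu ≤ r then max pl ((bu - r) / ((1 - δ) * Su)) else 0)
    (hbstar : bstar = if r ≤ bl then bl else if bu ≤ r then bu else r) :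
    ∀ p ∈ Icc pl pu, ∀ b ∈ Icc bl bu, ∀ S ∈ Iic Su,
      powerUtilityGenerator δ r p bstar Su ≤ powerUtilityGenerator δ r pstar bstar Su ∧
        powerUtilityGenerator δ r pstar bstar Su ≤ powerUtilityGenerator δ r pstar b S := by
  intro p hp b hb S hS
  have hblu : bl ≤ bu := hb.1.trans hb.2
  have hk : 0 ≤ (1 - δ) * Su := mul_nonneg (sub_nonneg.2 hδ.2.le) hSu.le
  rw [← projIcc_projIcc_sub_div_eq_ite hpl hpu hblu hk] at hpstar
  rw [← coe_projIcc_eq_ite hblu] at hbstar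
  subst hpstar hbstar
  exact ⟨powerUtilityGenerator_le_projIcc (hpl.trans hpu) hδ.1 hδ.2 hSu hp,
    powerUtilityGenerator_le_of_mul_sub_nonneg hδ.1 hδ.2.le hS
      (projIcc_sub_div_mul_sub_nonneg hpl hpu hblu hk hb)⟩

end PowerUtility

/-- explicit saddle point of
`G(p; b, S) = (1/2)δ(δ−1) S p² + δ p (b − r) + δ r`
on `[p̲, p̄] × ([b̲, b̄] × [Σ̲, Σ̄])` in dimension `d = 1`. -/
theorem stmt_7 (δ r pl pu bl bu Sl Su : ℝ) (hδ : δ ∈ Set.Ioo (0 : ℝ) 1) (hr : 0 ≤ r)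
    (hpl : pl ≤ 0) (hpu : 0 ≤ pu) (hb : bl ≤ bu)
    (hSl : 0 ≤ Sl) (hSlu : Sl ≤ Su) (hSu : 0 < Su)
    (G : ℝ → ℝ → ℝ → ℝ)
    (hG : ∀ p b S, G p b S = 1 / 2 * δ * (δ - 1) * S * p ^ 2 + δ * p * (b - r) + δ * r)
    (pstar bstar : ℝ)
    (hpstar : pstar = if r ≤ bl then min pu ((bl - r) / ((1 - δ) * Su))
      else if bu ≤ r then max pl ((bu - r) / ((1 - δ) * Su)) else 0)
    (hbstar : bstar = if r ≤ bl then bl else if bu ≤ r then bu else r) :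
    ∀ p ∈ Set.Icc pl pu, ∀ b ∈ Set.Icc bl bu, ∀ S ∈ Set.Icc Sl Su,
      G p bstar Su ≤ G pstar bstar Su ∧ G pstar bstar Su ≤ G pstar b S := by
  obtain rfl : G = powerUtilityGenerator δ r := funext₃ hG
  exact fun p hp b hb S hS ↦
    stmt_7_general (Set.Ioo_subset_Ico_self hδ) hpl hpu hSu hpstar hbstar p hp b hb S hS.2
end

section
/- Let d = 1, δ ∈ (0,1), r ≥ 0, and let real numbers p̲ ≤ 0 ≤ p̄, b̲ ≤ b̄, and 0 ≤ Σ̲ ≤ Σ̄ with Σ̄ > 0 be given. Define b* = b̲ if r ≤ b̲, b* = r if b̲ < r < b̄, and b* = b̄ if r ≥ b̄, and define p* as in the explicit saddle-point formula (p* = min{p̄, (b̲−r)/((1−δ)Σ̄)} if r ≤ b̲, p* = max{p̲, (b̄−r)/((1−δ)Σ̄)} if r ≥ b̄, p* = 0 otherwise). Then the saddle value satisfies G(p*; b*, Σ̄) = (1/2)δ(δ−1) Σ̄ · dist²( [p̲, p̄], (b* − r)/((1−δ)Σ̄) ) + (1/2)(δ/(1−δ)) (b* − r)²/Σ̄ +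 δr, where dist([p̲,p̄], x) denotes the distance from the point x to the interval [p̲, p̄]. -/
/-!
Completing the square in `p` rewrites `G(p; b, S)` as `-½δ(1-δ)S` times the squared distance from
`p` to the unconstrained critical point `x = (b - r)/((1-δ)S)`, plus a term independent of `p`. For
`b = b*` and `S = Σ̄`, the control `p*` is the projection of `x` onto `[p̲, p̄]`: since `0` lies in
that interval, the sign of `b* - r` leaves at most one of the two constraints to be enforced.
-/

open Set

theorem coe_projIcc_mem_uIcc {α : Type*} [LinearOrder α] {a b : α} (h : a ≤ b) (x : α) {y : α}
    (hy : y ∈ Icc a b) : (projIcc a b h x : α) ∈ uIcc x y := by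
  rw [coe_projIcc, mem_uIcc]
  rcases le_total x y with hxy | hyx
  · exact .inl ⟨le_max_of_le_right (le_min (hxy.trans hy.2) le_rfl),
      max_le hy.1 ((min_le_right b x).trans hxy)⟩
  · exact .inr ⟨le_max_of_le_right (le_min hy.2 hyx),
      max_le (hy.1.trans hyx) (min_le_right b x)⟩

theorem infDist_Icc_eq_dist_projIcc {a b : ℝ} (h : a ≤ b) (x : ℝ) :
    Metric.infDist x (Icc a b) = dist x (projIcc a b h x) := by
  apply le_antisymm (Metric.infDist_le_dist_of_mem (projIcc a b h x).2)
  rw [Metric.le_infDist (nonempty_Icc.mpr h)]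
  exact fun y hy ↦ Real.dist_left_le_of_mem_uIcc (coe_projIcc_mem_uIcc h x hy)

section Saddle

/-- The drift `b*` of the saddle point: the point of `[bl, bu]` closest to the interest rate `r`. -/
def saddleDrift {α : Type*} [LinearOrder α] (r bl bu : α) : α :=
  if r ≤ bl then bl else if bu ≤ r then bu else r

variable {K : Type*} [Field K]

/-- The control `p*` of the saddle point, with `c` standing for `(1 - δ) * Su`. -/
def saddleControl [LinearOrder K] (c r pl pu bl bu : K) : K :=
  if r ≤ bl then min pu ((bl - r) / c) else if bu ≤ r then max pl ((bu - r) / c) else 0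

theorem saddleControl_eq_projIcc [LinearOrder K] [IsStrictOrderedRing K] {c pl pu : K}
    (hc : 0 ≤ c) (hpl : pl ≤ 0) (hpu : 0 ≤ pu) (r bl bu : K) :
    saddleControl c r pl pu bl bu =
      projIcc pl pu (hpl.trans hpu) ((saddleDrift r bl bu - r) / c) := by
  rw [coe_projIcc]
  unfold saddleControl saddleDrift
  split_ifs with h_low h_high
  · have hx : 0 ≤ (bl - r) / c := div_nonneg (sub_nonneg.mpr h_low) hc
    exact (max_eq_right (hpl.trans (le_min hpu hx))).symm
  · have hx : (bu - r) / c ≤ 0 := div_nonpos_of_nonpos_of_nonneg (sub_nonpos.mpr h_high) hc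
    rw [min_eq_right (hx.trans hpu)]
  · rw [sub_self, zero_div, min_eq_right hpu, max_eq_right hpl]

theorem quadratic_add_linear_eq_sq_sub_add [NeZero (2 : K)] {δ S : K} (hδ : δ ≠ 1) (hS : S ≠ 0)
    (p m : K) :
    1 / 2 * δ * (δ - 1) * S * p ^ 2 + δ * p * m =
      1 / 2 * δ * (δ - 1) * S * (m / ((1 - δ) * S) - p) ^ 2
        + 1 / 2 * (δ / (1 - δ)) * m ^ 2 / S := by
  have h_two : (2 : K) ≠ 0 := two_ne_zero
  have h_sub : 1 - δ ≠ 0 := sub_ne_zero.mpr hδ.symm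
  field_simp
  ring

end Saddle

theorem stmt_8_general {δ r pl pu bl bu Su : ℝ} (hδ : δ < 1) (hpl : pl ≤ 0) (hpu : 0 ≤ pu)
    (hSu : 0 < Su) {G : ℝ → ℝ → ℝ → ℝ}
    (hG : ∀ p b S, G p b S = 1 / 2 * δ * (δ - 1) * S * p ^ 2 + δ * p * (b - r) + δ * r)
    {pstar bstar : ℝ} (hpstar : pstar = saddleControl ((1 - δ) * Su) r pl pu bl bu)
    (hbstar : bstar = saddleDrift r bl bu) :
    G pstar bstar Su
      = 1 / 2 * δ * (δ - 1) * Su *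
          (Metric.infDist ((bstar - r) / ((1 - δ) * Su)) (Icc pl pu)) ^ 2
        + 1 / 2 * (δ / (1 - δ)) * (bstar - r) ^ 2 / Su + δ * r := by
  have hc : 0 ≤ (1 - δ) * Su := mul_nonneg (sub_nonneg.mpr hδ.le) hSu.le
  have h_dist : Metric.infDist ((bstar - r) / ((1 - δ) * Su)) (Icc pl pu) =
      |(bstar - r) / ((1 - δ) * Su) - pstar| := by
    rw [infDist_Icc_eq_dist_projIcc (hpl.trans hpu), Real.dist_eq, hpstar, hbstar,
      saddleControl_eq_projIcc hc hpl hpu]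
  rw [hG, h_dist, sq_abs, quadratic_add_linear_eq_sq_sub_add hδ.ne hSu.ne']

/-- the saddle value in dimension `d = 1` satisfies
`G(p*; b*, Σ̄) = (1/2)δ(δ−1) Σ̄ · dist²([p̲,p̄], (b*−r)/((1−δ)Σ̄))
  + (1/2)(δ/(1−δ)) (b*−r)²/Σ̄ + δr`. -/
theorem stmt_8 (δ r pl pu bl bu Sl Su : ℝ) (hδ : δ ∈ Set.Ioo (0 : ℝ) 1) (hr : 0 ≤ r)
    (hpl : pl ≤ 0) (hpu : 0 ≤ pu) (hb : bl ≤ bu)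
    (hSl : 0 ≤ Sl) (hSlu : Sl ≤ Su) (hSu : 0 < Su)
    (G : ℝ → ℝ → ℝ → ℝ)
    (hG : ∀ p b S, G p b S = 1 / 2 * δ * (δ - 1) * S * p ^ 2 + δ * p * (b - r) + δ * r)
    (pstar bstar : ℝ)
    (hpstar : pstar = if r ≤ bl then min pu ((bl - r) / ((1 - δ) * Su))
      else if bu ≤ r then max pl ((bu - r) / ((1 - δ) * Su)) else 0)
    (hbstar : bstar = if r ≤ bl then bl else if bu ≤ r then bu else r) :
    G pstar bstar Su
      = 1 / 2 * δ * (δ - 1) * Su *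
          (Metric.infDist ((bstar - r) / ((1 - δ) * Su)) (Set.Icc pl pu)) ^ 2
        + 1 / 2 * (δ / (1 - δ)) * (bstar - r) ^ 2 / Su + δ * r :=
  stmt_8_general hδ.2 hpl hpu hSu hG hpstar hbstar
end
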